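/- arXiv:1801.09629 — 8 statements merged into one kernel-verified Lean document; each statement's English description precedes it below -/
import Mathlib

section
/- Let n be a positive integer, let G be a subgroup of the group 𝕊_n of n×n permutation matrices, and let K/F be a finite Galois extension together with an identification of Gal(K/F) with G. Let α ∈ K be a normal element for K/F. For i = 1,…,n set y_i = Σ_{g ∈ G} g(α x_i) = Σ_{g ∈ G} g(α)·x_{ρ_g(i)}, an element of K(x_1,…,x_n). Then the fixed field of the G-action on K(x_1,…,x_n) equals F(y_1,…,y_n); in particular y_1,…,y_n are algebraically independent over F. -/
set_option maxHeartbeats 1000000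
set_option synthInstance.maxHeartbeats 1000000

/-- The canonical embedding of `K` into the rational function field
`K(x₁, …, xₙ) = Frac(K[x₁, …, xₙ])`. -/
noncomputable def ratFuncιK (n : ℕ) (K : Type*) [Field K] :
    K →+* FractionRing (MvPolynomial (Fin n) K) :=
  (algebraMap (MvPolynomial (Fin n) K) (FractionRing (MvPolynomial (Fin n) K))).comp
    MvPolynomial.C

/-- The variable `xᵢ`, viewed as an element of the rational function field
`K(x₁, …, xₙ) = Frac(K[x₁, …, xₙ])`. -/
noncomputable def ratFuncX (n : ℕ) (K : Type*) [Field K] (i : Fin n) :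
    FractionRing (MvPolynomial (Fin n) K) :=
  algebraMap (MvPolynomial (Fin n) K) (FractionRing (MvPolynomial (Fin n) K))
    (MvPolynomial.X i)

/-- `α ∈ K` is a normal element of the finite Galois extension `K/F` if its Galois conjugates
`{g α : g ∈ Gal(K/F)}` form an `F`-basis of `K`. -/
def IsNormalElement (F : Type*) {K : Type*} [Field F] [Field K] [Algebra F K] (α : K) : Prop :=
  LinearIndependent F (fun g : K ≃ₐ[F] K => g α) ∧
    Submodule.span F (Set.range fun g : K ≃ₐ[F] K => g α) = ⊤

/-!
The `yᵢ` are obtained from the `xᵢ` by an invertible `K`-linear substitution. Indeed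
`yᵢ = ∑ g(α) x_{g i}` is the image of `xᵢ` under the action of the resolvend `∑ g(α) g ∈ K[G]` on
the permutation module with basis the `xᵢ`. If `β` is the element of the trace-dual basis with
`Tr(β g(α)) = δ_{g,1}`, then `∑ g(β) g⁻¹` is a left inverse of this resolvend, hence an inverse as
`K[G]` is finite-dimensional.

So the `yᵢ` are again algebraically independent and generate `K(x₁, …, xₙ)` over `K`, but they are
`G`-invariant. An element of `K(y) = K · F(y)` is a sum of terms `a l` with `a ∈ K`, `l ∈ F(y)`, and
its sum over `G` is the sum of the `Tr(a) l`, which lies in `F(y)`. If `Tr(b) = 1`, an invariant `z`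
is itself the sum over `G` of `b z`, so it lies in `F(y)`.
-/

open MonoidAlgebra (single)

section Bases

variable {ι R M A : Type*} [CommRing R] [AddCommGroup M] [Module R M] [CommRing A] [Algebra R A]

lemma algebraicIndependent_comp_basis_iff (b : Module.Basis ι R M) (f : M →ₗ[R] A) :
    AlgebraicIndependent R (f ∘ b) ↔ Function.Injective (SymmetricAlgebra.lift f) := by
  have hcomp : SymmetricAlgebra.lift f =
      (MvPolynomial.aeval (f ∘ b)).comp (SymmetricAlgebra.equivMvPolynomial b).toAlgHom :=
    SymmetricAlgebra.algHom_ext (b.ext fun i => by simp)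
  rw [hcomp, AlgHom.coe_comp]
  exact (EquivLike.injective_comp (SymmetricAlgebra.equivMvPolynomial b) _).symm

lemma adjoin_range_comp_basis_eq {F E : Type*} [Field F] [Field E] [Algebra F E] [Module F M]
    (b : Module.Basis ι F M) (f : M →ₗ[F] E) :
    IntermediateField.adjoin F (Set.range (f ∘ b)) =
      IntermediateField.adjoin F (f.range : Set E) := by
  refine le_antisymm (IntermediateField.adjoin.mono _ _ _ ?_)
    (IntermediateField.adjoin_le_iff.2 ?_)
  · exact Set.range_comp_subset_range b f
  · have hspan : f.range = Submodule.span F (Set.range (f ∘ b)) := by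
      rw [Set.range_comp, Submodule.span_image, b.span_eq, Submodule.map_top]
    rw [hspan]
    exact Submodule.span_le
      (p := (IntermediateField.adjoin F (Set.range (f ∘ b))).toSubalgebra.toSubmodule).2
      (IntermediateField.subset_adjoin F _)

end Bases

section Resolvend

variable {F K H : Type*} [Field F] [Field K] [Algebra F K] [Group H] [Fintype H]

/-- The resolvend of `a ∈ K` for `Gal(K/F)` identified with `H`, an element of the group algebra
`K[H]`. The convention is `∑ g(a) g`, instead of the also common `∑ g(a) g⁻¹`, so that the
resolvend sends `xᵢ` to `∑ g(a) x_{g i}` in a permutation representation. -/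
noncomputable def resolvend (e : H ≃* Gal(K/F)) (a : K) : MonoidAlgebra K H :=
  ∑ g, single g (e g a)

variable [FiniteDimensional F K] [IsGalois F K]

lemma algebraMap_trace_eq_sum (e : H ≃* Gal(K/F)) (a : K) :
    algebraMap F K (Algebra.trace F K a) = ∑ g, e g a := by
  rw [trace_eq_sum_automorphisms]
  exact (e.toEquiv.sum_comp (· a)).symm

open scoped Classical in
lemma IsNormalElement.exists_trace_mul_eq_ite {α : K} (hα : IsNormalElement F α) :
    ∃ β : K, ∀ g : Gal(K/F), Algebra.trace F K (β * g α) = if g = 1 then 1 else 0 := by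
  let b := Module.Basis.mk hα.1 hα.2.ge
  exact ⟨b.traceDual 1, fun g => by simpa [b] using b.trace_traceDual_mul 1 g⟩

lemma IsNormalElement.isUnit_resolvend {α : K} (hα : IsNormalElement F α)
    (e : H ≃* Gal(K/F)) : IsUnit (resolvend e α) := by
  classical
  obtain ⟨β, hβ⟩ := hα.exists_trace_mul_eq_ite
  have : Module.Finite K (MonoidAlgebra K H) := .of_basis (MonoidAlgebra.basis H K)
  have : IsArtinianRing (MonoidAlgebra K H) := .of_finite K _
  refine IsUnit.of_mul_eq_one_right (∑ g, single g⁻¹ (e g β)) ?_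
  calc (∑ g : H, single g⁻¹ (e g β)) * resolvend e α
      = ∑ g, ∑ h, single (g⁻¹ * h) (e g β * e h α) := by
        simp only [resolvend, Finset.sum_mul_sum, MonoidAlgebra.single_mul_single]
    _ = ∑ g, ∑ k, single k (e g (β * e k α)) := by
        refine Finset.sum_congr rfl fun g _ => ?_
        exact Fintype.sum_equiv (Equiv.mulLeft g⁻¹) _ _ fun h => by simp
    _ = ∑ k, single k (algebraMap F K (Algebra.trace F K (β * e k α))) := by
        rw [Finset.sum_comm]
        simp only [algebraMap_trace_eq_sum e, ← MonoidAlgebra.lsingle_apply (R := K), map_sum]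
    _ = 1 := by
        simp [hβ, apply_ite, MonoidAlgebra.one_def]

/-- The basis of the permutation representation `K[σ]` obtained by letting the resolvend of a
normal element act on the standard basis: it relates the `yᵢ` of the no-name lemma to the `xᵢ`. -/
noncomputable def resolvendBasis (σ : Type*) [MulAction H σ] {α : K} (hα : IsNormalElement F α)
    (e : H ≃* Gal(K/F)) : Module.Basis σ K (MonoidAlgebra K σ) :=
  (MonoidAlgebra.basis σ K).map <| LinearEquiv.ofBijective
    ((Representation.ofMulAction K H σ).asAlgebraHom (resolvend e α))
    ((Module.End.isUnit_iff _).1 ((hα.isUnit_resolvend e).map _))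

lemma resolvendBasis_apply {σ : Type*} [MulAction H σ] {α : K} (hα : IsNormalElement F α)
    (e : H ≃* Gal(K/F)) (i : σ) :
    resolvendBasis σ hα e i = ∑ g : H, e g α • MonoidAlgebra.basis σ K (g • i) := by
  simp [resolvendBasis, resolvend]

end Resolvend

section Descent

variable {F K E : Type*} [Field F] [Field K] [Algebra F K] [Field E] [Algebra F E] [Algebra K E]
  [IsScalarTower F K E]

lemma fieldRange_mul_adjoin_eq_top [Algebra.IsAlgebraic F K] {S : Set E}
    (hS : IntermediateField.adjoin K S = ⊤) :
    (IsScalarTower.toAlgHom F K E).fieldRange.toSubalgebra.toSubmodule *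
      (IntermediateField.adjoin F S).toSubalgebra.toSubmodule = ⊤ := by
  let K' := (IsScalarTower.toAlgHom F K E).fieldRange
  let eK : K ≃ₐ[F] K' := AlgEquiv.ofInjectiveField (IsScalarTower.toAlgHom F K E)
  have : Algebra.IsAlgebraic F K' := eK.isAlgebraic
  have hsup : K' ⊔ IntermediateField.adjoin F S = ⊤ := by
    rw [← IntermediateField.restrictScalars_adjoin_eq_sup,
      ← IntermediateField.restrictScalars_adjoin_of_algEquiv eK rfl, hS,
      IntermediateField.restrictScalars_top]
  rw [Subalgebra.mul_toSubmodule,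
    ← IntermediateField.sup_toSubalgebra_of_isAlgebraic_left K' (IntermediateField.adjoin F S),
    hsup]
  rfl

variable [FiniteDimensional F K] [IsGalois F K] {H : Type*} [Group H] [MulSemiringAction H E]
  {e : H ≃* Gal(K/F)}

lemma sum_smul_algebraMap_mul [Fintype H]
    (he : ∀ (g : H) (a : K), g • algebraMap K E a = algebraMap K E (e g a))
    (a : K) {z : E} (hz : z ∈ FixedPoints.subfield H E) :
    ∑ g : H, g • (algebraMap K E a * z) = algebraMap F E (Algebra.trace F K a) * z := by
  have hz' (g : H) : g • z = z := hz g
  simp only [smul_mul', he, hz', ← Finset.sum_mul, ← map_sum, ← algebraMap_trace_eq_sum,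
    ← IsScalarTower.algebraMap_apply]

lemma fixedPoints_subfield_eq_adjoin
    (he : ∀ (g : H) (a : K), g • algebraMap K E a = algebraMap K E (e g a))
    {S : Set E} (hfixed : S ⊆ FixedPoints.subfield H E)
    (hS : IntermediateField.adjoin K S = ⊤) :
    FixedPoints.subfield H E = (IntermediateField.adjoin F S).toSubfield := by
  have := Fintype.ofEquiv _ e.symm.toEquiv
  set L := IntermediateField.adjoin F S
  have hL : L.toSubfield ≤ FixedPoints.subfield H E := by
    refine Subfield.closure_le.2 (Set.union_subset ?_ hfixed)
    rintro _ ⟨a, rfl⟩ g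
    rw [IsScalarTower.algebraMap_apply F K E, he, AlgEquiv.commutes]
  have sum_smul_mem (z : E) : ∑ g : H, g • z ∈ L := by
    have hz := (fieldRange_mul_adjoin_eq_top (F := F) hS).ge (Submodule.mem_top (x := z))
    induction hz using Submodule.mul_induction_on' with
    | mem_mul_mem a ha l hl =>
      obtain ⟨a, rfl⟩ := ha
      exact sum_smul_algebraMap_mul he a (hL hl) ▸ L.mul_mem (L.algebraMap_mem _) hl
    | add z _ w _ hz hw =>
      simp only [smul_add, Finset.sum_add_distrib]
      exact L.add_mem hz hw
  refine le_antisymm (fun z hz => ?_) hL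
  obtain ⟨b, hb⟩ := Algebra.trace_surjective F K 1
  have hz_eq : ∑ g : H, g • (algebraMap K E b * z) = z := by
    rw [sum_smul_algebraMap_mul he b hz, hb, map_one, one_mul]
  exact hz_eq ▸ sum_smul_mem _

end Descent

lemma sum_smul_mem_fixedPoints_subfield {H E : Type*} [Group H] [Fintype H] [Field E]
    [MulSemiringAction H E] (z : E) : ∑ g : H, g • z ∈ FixedPoints.subfield H E := by
  intro g
  simp only [Finset.smul_sum, ← mul_smul]
  exact Fintype.sum_equiv (Equiv.mulLeft g) _ _ fun _ => rfl

section RationalFunctions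

variable (σ K : Type*) [Field K]

lemma algebraicIndependent_algebraMap_X : AlgebraicIndependent K fun i : σ =>
    algebraMap (MvPolynomial σ K) (FractionRing (MvPolynomial σ K)) (MvPolynomial.X i) :=
  (MvPolynomial.algebraicIndependent_X σ K).map'
    (f := IsScalarTower.toAlgHom K _ (FractionRing (MvPolynomial σ K)))
    (IsFractionRing.injective _ _)

lemma adjoin_range_algebraMap_X : IntermediateField.adjoin K (Set.range fun i : σ =>
    algebraMap (MvPolynomial σ K) (FractionRing (MvPolynomial σ K)) (MvPolynomial.X i)) = ⊤ := by
  let g := IsScalarTower.toAlgHom K (MvPolynomial σ K) (FractionRing (MvPolynomial σ K))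
  have hg : g.range = Algebra.adjoin K (Set.range fun i => g (MvPolynomial.X i)) := by
    rw [← Algebra.map_top g, ← MvPolynomial.adjoin_range_X, AlgHom.map_adjoin, ← Set.range_comp]
    rfl
  exact (IsFractionRing.algHom_fieldRange_eq_of_comp_eq_of_range_eq
    (f := AlgHom.id K _) rfl hg).symm.trans (AlgEquiv.fieldRange_eq_top .refl)

end RationalFunctions

section NoName

variable {F K E H σ : Type*} [Field F] [Field K] [Algebra F K] [FiniteDimensional F K]
  [IsGalois F K] [Field E] [Algebra K E]
  [Group H] [Fintype H] [MulSemiringAction H E] [MulAction H σ] {e : H ≃* Gal(K/F)}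

lemma constr_comp_resolvendBasis
    (he : ∀ (g : H) (a : K), g • algebraMap K E a = algebraMap K E (e g a))
    {x : σ → E} (hx : ∀ (g : H) i, g • x i = x (g • i)) {α : K} (hα : IsNormalElement F α) :
    (MonoidAlgebra.basis σ K).constr K x ∘ resolvendBasis σ hα e =
      fun i => ∑ g : H, g • (algebraMap K E α * x i) := by
  ext i
  simp only [Function.comp_apply, resolvendBasis_apply, map_sum, map_smul,
    Module.Basis.constr_basis, smul_mul', he, hx, Algebra.smul_def]

theorem noname_lemma_permutation_case_general [Algebra F E] [IsScalarTower F K E]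
    (he : ∀ (g : H) (a : K), g • algebraMap K E a = algebraMap K E (e g a))
    {x : σ → E} (hx : ∀ (g : H) i, g • x i = x (g • i))
    (hind : AlgebraicIndependent K x) (htop : IntermediateField.adjoin K (Set.range x) = ⊤)
    {α : K} (hα : IsNormalElement F α) {y : σ → E}
    (hy : ∀ i, y i = ∑ g : H, g • (algebraMap K E α * x i)) :
    FixedPoints.subfield H E = (IntermediateField.adjoin F (Set.range y)).toSubfield ∧
      AlgebraicIndependent F y := by
  let f := (MonoidAlgebra.basis σ K).constr K x
  have hfx : f ∘ MonoidAlgebra.basis σ K = x :=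
    funext ((MonoidAlgebra.basis σ K).constr_basis K x)
  have hfy : f ∘ resolvendBasis σ hα e = y :=
    (constr_comp_resolvendBasis he hx hα).trans (funext hy).symm
  constructor
  · apply fixedPoints_subfield_eq_adjoin he
    · rintro _ ⟨i, rfl⟩
      exact hy i ▸ sum_smul_mem_fixedPoints_subfield _
    · rw [← hfy, adjoin_range_comp_basis_eq, ← adjoin_range_comp_basis_eq, hfx, htop]
  · refine AlgebraicIndependent.restrictScalars (K := K) (algebraMap F K).injective ?_
    rw [← hfy, algebraicIndependent_comp_basis_iff, ← algebraicIndependent_comp_basis_iff, hfx]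
    exact hind

end NoName

/-- **Constructive no-name lemma, permutation case.**  Let `G` be a subgroup of the group
`𝕊_n ≅ S_n` of `n × n` permutation matrices (a permutation matrix `g` is identified with the
permutation `ρ_g` sending `i` to `j` when `g eᵢ = eⱼ`), let `K/F` be a finite Galois extension
with Galois group identified with `G` via `e : G ≃* Gal(K/F)`, and let `α ∈ K` be a normal
element for `K/F`.  Let `G` act on `K(x₁, …, xₙ)` through the Galois action on `K` and by
`g(xᵢ) = x_{ρ_g(i)}` on the variables, and set `yᵢ = ∑_{g ∈ G} g(α · xᵢ)`.  Then the fixed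
field of the `G`-action equals `F(y₁, …, yₙ)`; in particular `y₁, …, yₙ` are algebraically
independent over `F` (the evaluation map `F[Y₁, …, Yₙ] → K(x₁, …, xₙ)`, `Yᵢ ↦ yᵢ`, is
injective). -/
theorem noname_lemma_permutation_case
    (n : ℕ) (hn : 0 < n) (G : Subgroup (Equiv.Perm (Fin n))) [Fintype G]
    (F K : Type*) [Field F] [Field K] [Algebra F K] [FiniteDimensional F K] [IsGalois F K]
    (e : G ≃* (K ≃ₐ[F] K)) (α : K) (hα : IsNormalElement F α)
    [MulSemiringAction G (FractionRing (MvPolynomial (Fin n) K))]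
    (hactK : ∀ (g : G) (a : K), g • ratFuncιK n K a = ratFuncιK n K ((e g) a))
    (hactX : ∀ (g : G) (i : Fin n),
      g • ratFuncX n K i = ratFuncX n K ((g : Equiv.Perm (Fin n)) i))
    (y : Fin n → FractionRing (MvPolynomial (Fin n) K))
    (hy : ∀ i : Fin n, y i = ∑ g : G, g • (ratFuncιK n K α * ratFuncX n K i)) :
    FixedPoints.subfield G (FractionRing (MvPolynomial (Fin n) K)) =
      Subfield.closure
        (Set.range ((ratFuncιK n K).comp (algebraMap F K)) ∪ Set.range y) ∧
    Function.Injective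
      (MvPolynomial.eval₂Hom ((ratFuncιK n K).comp (algebraMap F K)) y) := by
  exact noname_lemma_permutation_case_general (K := K) hactK hactX
    (algebraicIndependent_algebraMap_X _ K) (adjoin_range_algebraMap_X _ K) hα hy
end

section
/- Let n be a positive integer, let G be a subgroup of the group 𝔹_n of n×n signed permutation matrices, and let K/F be a finite Galois extension together with an identification of Gal(K/F) with G. Let α ∈ K be a normal element for K/F. For i = 1,…,n set y_i = Σ_{g ∈ G} g(α/(1+x_i)), an element of K(x_1,…,x_n). Then the fixed field of the G-action on K(x_1,…,x_n) equals F(y_1,…,y_n); in particular y_1,…,y_n are algebraically independent over F. -/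
set_option maxHeartbeats 1000000
set_option synthInstance.maxHeartbeats 1000000

/-- The `i`-th column of a signed permutation matrix `g` (an element of `GL(n, ℤ)`),
i.e. the image `g eᵢ` of the `i`-th standard basis vector of `ℤⁿ`. -/
def sgnPermCol {n : ℕ} (g : Matrix.GeneralLinearGroup (Fin n) ℤ) (i : Fin n) : Fin n → ℤ :=
  Matrix.mulVec ((g : Matrix.GeneralLinearGroup (Fin n) ℤ) : Matrix (Fin n) (Fin n) ℤ)
    (Pi.single i 1)

/-!
Write `tr v = ∑ g, g • v` for the sum over a finite group `G = Gal(K/F)` acting semilinearly.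

The functions `zᵢ = 1 / (1 + xᵢ)` linearise the action: since `1 / (1 + x⁻¹) = 1 - 1 / (1 + x)`,
the `F`-span of `z₀ = 1, z₁, …, zₙ` is `G`-stable.  If `∑ i, cᵢ • tr (α zᵢ) = 0` with `cᵢ ∈ F`,
then `∑ g, g α • g v = 0` for `v = ∑ i, cᵢ • zᵢ`, and as the conjugates `g α` are independent over
`F` while the `zᵢ` are independent over `K`, this forces `v = 0`.  So the invariants
`tr α, y₁, …, yₙ` are linearly independent over `F`, hence, by Galois descent, over `K`; by
dimension they have the same `K`-span as `1, z₁, …, zₙ`.  Thus `K(y₁, …, yₙ) = K(x₁, …, xₙ)`,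
which gives algebraic independence by transcendence degree, and gives that `K(x₁, …, xₙ)` has degree
at most `[K : F] = |G|` over `F(y₁, …, yₙ)`, so that the fixed field cannot be larger.
-/

section Semilinear

open Submodule

variable {G F K V ι : Type*} [Group G] [Field F] [Field K] [Algebra F K]
  [MulSemiringAction G K]

theorem smul_sum_smul [Fintype G] [AddCommMonoid V] [DistribMulAction G V] (g : G) (v : V) :
    g • ∑ h : G, h • v = ∑ h : G, h • v := by
  simp only [Finset.smul_sum, ← mul_smul]
  exact Equiv.sum_comp (Equiv.mulLeft g) (· • v)

theorem algebraMap_trace_eq_sum_smul [Fintype G] [IsGaloisGroup G F K] (a : K) :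
    algebraMap F K (Algebra.trace F K a) = ∑ g : G, g • a := by
  have := IsGaloisGroup.isGalois G F K
  have := IsGaloisGroup.finiteDimensional G F K
  rw [trace_eq_sum_automorphisms]
  exact ((IsGaloisGroup.mulEquivAlgEquiv G F K).toEquiv.sum_comp (· a)).symm

variable [AddCommGroup V] [Module F V] [Module K V] [IsScalarTower F K V]

theorem eq_zero_of_sum_smul_eq_zero_of_mem_span {κ : Type*} [Fintype κ] {a : κ → K}
    (ha : LinearIndependent F a) {v : ι → V} (hv : LinearIndependent K v) {w : κ → V}
    (hw : ∀ k, w k ∈ span F (Set.range v)) (hsum : ∑ k, a k • w k = 0) (k : κ) : w k = 0 := by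
  simp only [Finsupp.mem_span_range_iff_exists_finsupp] at hw
  choose c hc using hw
  have hcomb : Finsupp.linearCombination K v
      (∑ k, (c k).mapRange (fun r ↦ r • a k) (zero_smul F _)) = 0 := by
    rw [← hsum, map_sum]
    refine Finset.sum_congr rfl fun k _ ↦ ?_
    rw [← hc k, Finsupp.linearCombination_apply, Finsupp.sum_mapRange_index (by simp),
      Finsupp.smul_sum]
    exact Finsupp.sum_congr fun i _ ↦ by rw [smul_assoc, smul_comm]
  have hcoeff (i : ι) : ∑ k, c k i • a k = 0 := by
    simpa using DFunLike.congr_fun (linearIndependent_iff.1 hv _ hcomb) i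
  rw [← hc k]
  exact Finset.sum_eq_zero fun i _ ↦ by
    simp [Fintype.linearIndependent_iff.1 ha (c · i) (hcoeff i) k]

variable [DistribMulAction G V] [SMulDistribClass G K V]

theorem sum_smul_smul_eq_trace_smul [Fintype G] [IsGaloisGroup G F K] (a : K) {v : V}
    (hv : ∀ g : G, g • v = v) : ∑ g : G, g • a • v = Algebra.trace F K a • v := by
  simp only [smul_distrib_smul, hv]
  rw [← Finset.sum_smul, ← algebraMap_trace_eq_sum_smul (F := F), algebraMap_smul]

theorem linearIndependent_of_forall_smul_eq [Finite G] [IsGaloisGroup G F K] {v : ι → V}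
    (hv : LinearIndependent F v) (hfix : ∀ i, ∀ g : G, g • v i = v i) :
    LinearIndependent K v := by
  have := Fintype.ofFinite G
  have := IsGaloisGroup.isGalois G F K
  have := IsGaloisGroup.finiteDimensional G F K
  refine linearIndependent_iff'.2 fun s c hc i hi ↦ (traceForm_nondegenerate F K).1 _ fun b ↦ ?_
  have htrace : ∑ i ∈ s, Algebra.trace F K (c i * b) • v i = 0 := calc
    _ = ∑ i ∈ s, ∑ g : G, g • (c i * b) • v i :=
      Finset.sum_congr rfl fun i _ ↦ (sum_smul_smul_eq_trace_smul _ (hfix i)).symm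
    _ = ∑ g : G, g • b • ∑ i ∈ s, c i • v i := by
      rw [Finset.sum_comm]
      simp only [Finset.smul_sum, smul_smul, mul_comm]
    _ = 0 := by simp [hc]
  exact linearIndependent_iff'.1 hv s _ htrace i hi

variable [Fintype G] [SMulCommClass G F V] {α : K} {v : ι → V}

theorem linearIndependent_sum_smul_of_smul_mem_span
    (hα : LinearIndependent F fun g : G ↦ g • α) (hv : LinearIndependent K v)
    (hstable : ∀ (g : G) i, g • v i ∈ span F (Set.range v)) :
    LinearIndependent F fun i ↦ ∑ g : G, g • α • v i := by
  refine linearIndependent_iff'.2 fun s c hc ↦ ?_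
  set w := ∑ i ∈ s, c i • v i
  have hw (g : G) : g • w ∈ span F (Set.range v) := by
    simp only [w, Finset.smul_sum, smul_comm g]
    exact sum_mem fun i _ ↦ smul_mem _ _ (hstable g i)
  have hsum : ∑ g : G, (g • α) • g • w = 0 := by
    rw [← hc]
    simp only [w, Finset.smul_sum, smul_distrib_smul, smul_comm _ (c _)]
    exact Finset.sum_comm
  have hw_zero : w = 0 := by
    simpa using eq_zero_of_sum_smul_eq_zero_of_mem_span hα hv hw hsum 1
  exact linearIndependent_iff'.1 (hv.restrict_scalars' F) s c hw_zero

theorem span_sum_smul_eq_of_smul_mem_span [Finite ι] [IsGaloisGroup G F K]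
    (hα : LinearIndependent F fun g : G ↦ g • α) (hv : LinearIndependent K v)
    (hstable : ∀ (g : G) i, g • v i ∈ span F (Set.range v)) :
    span K (Set.range fun i ↦ ∑ g : G, g • α • v i) = span K (Set.range v) := by
  have := Fintype.ofFinite ι
  have hli : LinearIndependent K fun i ↦ ∑ g : G, g • α • v i :=
    linearIndependent_of_forall_smul_eq
      (linearIndependent_sum_smul_of_smul_mem_span hα hv hstable) fun _ g ↦ smul_sum_smul g _
  have hle : span K (Set.range fun i ↦ ∑ g : G, g • α • v i) ≤ span K (Set.range v) := by
    rw [span_le]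
    rintro _ ⟨i, rfl⟩
    refine sum_mem fun g _ ↦ ?_
    rw [smul_distrib_smul]
    exact smul_mem _ _ (span_subset_span F K _ (hstable g i))
  have := FiniteDimensional.span_of_finite K (Set.finite_range v)
  exact Submodule.eq_of_le_of_finrank_eq hle
    ((finrank_span_eq_card hli).trans (finrank_span_eq_card hv).symm)

end Semilinear

section FieldExtension

open IntermediateField

variable {G F K M ι : Type*} [Field F] [Field K] [Field M] [Algebra K M]

theorem isAlgebraic_adjoin_of_adjoin_eq_top {S : Set M} (hS : adjoin K S = ⊤) :
    Algebra.IsAlgebraic (Algebra.adjoin K S) M := by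
  refine ⟨fun m ↦ ?_⟩
  obtain ⟨r, hr, s, hs, rfl⟩ := mem_adjoin_iff_div.1 (hS ▸ mem_top : m ∈ adjoin K S)
  rw [div_eq_mul_inv]
  exact (isAlgebraic_algebraMap (⟨r, hr⟩ : Algebra.adjoin K S)).mul
    (isAlgebraic_algebraMap (⟨s, hs⟩ : Algebra.adjoin K S)).inv

theorem algebraicIndependent_of_adjoin_eq_top [Finite ι] {x y : ι → M}
    (hx : AlgebraicIndependent K x) (hy : adjoin K (Set.range y) = ⊤) :
    AlgebraicIndependent K y :=
  have := isAlgebraic_adjoin_of_adjoin_eq_top hy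
  (Algebra.IsAlgebraic.isTranscendenceBasis_of_lift_le_trdeg_of_finite K y
    hx.lift_cardinalMk_le_trdeg).1

theorem linearIndependent_option_elim_one {z : ι → M} (hz : AlgebraicIndependent K z) :
    LinearIndependent K fun o : Option ι ↦ o.elim 1 z := by
  have hinj : Function.Injective fun o : Option ι ↦ o.elim 0 (Finsupp.single · 1) := by
    rintro (_ | i) (_ | j) h
    · rfl
    · simp [eq_comm] at h
    · simp at h
    · simpa [Finsupp.single_left_inj] using h
  have hmonomials := ((MvPolynomial.basisMonomials ι K).linearIndependent.comp _ hinj).map'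
    (MvPolynomial.aeval z).toLinearMap (LinearMap.ker_eq_bot.2 hz)
  convert! hmonomials using 2 with o
  cases o <;> simp [MvPolynomial.aeval_monomial]

theorem one_add_ne_zero_of_transcendental {x : M} (hx : Transcendental K x) : 1 + x ≠ 0 :=
  fun h ↦ hx <| by simpa [eq_neg_of_add_eq_zero_right h] using isAlgebraic_one.neg

theorem inv_one_add_inv {x : M} (hx : x ≠ 0) (hx' : 1 + x ≠ 0) :
    (1 + x⁻¹)⁻¹ = 1 - (1 + x)⁻¹ := by
  have hx'' : x + 1 ≠ 0 := add_comm 1 x ▸ hx'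
  field_simp
  ring

theorem adjoin_range_inv_one_add (x : ι → M) :
    adjoin K (Set.range fun i ↦ (1 + x i)⁻¹) = adjoin K (Set.range x) := by
  refine le_antisymm (adjoin_le_iff.2 ?_) (adjoin_le_iff.2 ?_) <;> rintro _ ⟨i, rfl⟩
  · exact inv_mem (add_mem (one_mem _) (subset_adjoin K _ ⟨i, rfl⟩))
  · rw [← add_sub_cancel_left 1 (x i), ← inv_inv (1 + x i)]
    exact sub_mem (inv_mem (subset_adjoin K _ ⟨i, rfl⟩)) (one_mem _)

variable [Algebra F M] [Group G] [MulSemiringAction G M]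

theorem smul_inv_one_add_mem_span {x : ι → M} (hx : AlgebraicIndependent K x) {g : G} {i j : ι}
    (hij : g • x i = x j ∨ g • x i = (x j)⁻¹) :
    g • (1 + x i)⁻¹ ∈ Submodule.span F (insert 1 (Set.range fun i ↦ (1 + x i)⁻¹)) := by
  have hj : (1 + x j)⁻¹ ∈ Submodule.span F (insert 1 (Set.range fun i ↦ (1 + x i)⁻¹)) :=
    Submodule.subset_span (.inr ⟨j, rfl⟩)
  obtain hij | hij := hij <;> rw [smul_inv'', smul_add, smul_one, hij]
  · exact hj
  · rw [inv_one_add_inv (hx.ne_zero j) (one_add_ne_zero_of_transcendental (hx.transcendental j))]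
    exact sub_mem (Submodule.subset_span (.inl rfl)) hj

variable [Algebra F K] [IsScalarTower F K M]

variable (K) in
theorem finiteDimensional_and_finrank_le_of_adjoin_eq_top [FiniteDimensional F K]
    (L : IntermediateField F M) (htop : adjoin K (L : Set M) = ⊤) :
    FiniteDimensional L M ∧ Module.finrank L M ≤ Module.finrank F K := by
  let K' := (IsScalarTower.toAlgHom F K M).fieldRange
  have hK' : (K' : Set M) = Set.range (algebraMap K M) := AlgHom.coe_fieldRange _
  have e : K ≃ₐ[F] K' := AlgEquiv.ofInjectiveField _
  have := e.toLinearEquiv.finiteDimensional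
  have hLK' : adjoin L (K' : Set M) = ⊤ := by
    have hle : (adjoin K (L : Set M)).toSubfield ≤ (adjoin L (K' : Set M)).toSubfield :=
      Subfield.closure_le.2 <| Set.union_subset (hK' ▸ subset_adjoin L _) fun l hl ↦
        algebraMap_mem _ (⟨l, hl⟩ : L)
    exact eq_top_iff.2 fun m _ ↦ hle (htop ▸ mem_top : m ∈ adjoin K (L : Set M))
  have hrank : Module.rank L M ≤ Module.rank F K' := by
    rw [← rank_top', ← hLK']
    exact adjoin_rank_le_of_isAlgebraic_right L K'
  refine ⟨Module.rank_lt_aleph0_iff.1 (hrank.trans_lt (Module.rank_lt_aleph0 F K')), ?_⟩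
  rw [e.toLinearEquiv.finrank_eq]
  exact Cardinal.toNat_le_toNat hrank (Module.rank_lt_aleph0 F K')

variable [MulSemiringAction G K] [IsGaloisGroup G F K] [SMulDistribClass G K M]
  [SMulCommClass G F M]

variable (K) in
theorem fixedPoints_eq_adjoin_of_adjoin_eq_top [Finite G] {S : Set M}
    (hS : ∀ s ∈ S, ∀ g : G, g • s = s) (htop : adjoin K S = ⊤) :
    FixedPoints.intermediateField G = adjoin F S := by
  have := Fintype.ofFinite G
  have : FaithfulSMul G M := ⟨fun {g h} hgh ↦
    (IsGaloisGroup.faithful F (G := G) (B := K)).eq_of_smul_eq_smul fun a ↦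
      (algebraMap K M).injective <| by simpa only [algebraMap.smul'] using hgh (algebraMap K M a)⟩
  have := IsGaloisGroup.finiteDimensional G F K
  obtain ⟨_, hle⟩ := finiteDimensional_and_finrank_le_of_adjoin_eq_top K (adjoin F S) <|
    top_le_iff.1 <| htop ▸ adjoin.mono K _ _ (subset_adjoin F S)
  have hfixed : Module.finrank (FixedPoints.intermediateField G : IntermediateField F M) M =
      Module.finrank F K :=
    (FixedPoints.finrank_eq_card G M).trans <|
      Nat.card_eq_fintype_card.symm.trans (IsGaloisGroup.card_eq_finrank G F K)
  have hsub : adjoin F S ≤ FixedPoints.intermediateField G := adjoin_le_iff.2 hS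
  exact (eq_of_le_of_finrank_le' hsub (hle.trans hfixed.ge)).symm

theorem adjoin_sum_smul_eq_top_of_smul_mem_span [Finite ι] [Fintype G] {α : K}
    (hα : LinearIndependent F fun g : G ↦ g • α) {z : ι → M} (hz : AlgebraicIndependent K z)
    (htop : adjoin K (Set.range z) = ⊤)
    (hstable : ∀ (g : G) i, g • z i ∈ Submodule.span F (insert 1 (Set.range z))) :
    adjoin K (Set.range fun i ↦ ∑ g : G, g • α • z i) = ⊤ := by
  let z₁ (o : Option ι) : M := o.elim 1 z
  have hz₁ : Set.range z₁ = insert 1 (Set.range z) := Option.range_eq z₁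
  have hstable₁ (g : G) : ∀ o, g • z₁ o ∈ Submodule.span F (Set.range z₁) := by
    rw [hz₁]
    rintro (_ | i)
    · exact Submodule.subset_span (.inl (smul_one g))
    · exact hstable g i
  have hspan := span_sum_smul_eq_of_smul_mem_span hα (linearIndependent_option_elim_one hz) hstable₁
  have hle : Submodule.span K (Set.range fun o ↦ ∑ g : G, g • α • z₁ o) ≤
      (adjoin K (Set.range fun i ↦ ∑ g : G, g • α • z i)).toSubmodule := by
    rw [Submodule.span_le]
    rintro _ ⟨_ | i, rfl⟩
    · have htrace : ∑ g : G, g • α • (1 : M) = algebraMap F K (Algebra.trace F K α) • 1 := by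
        rw [algebraMap_smul, sum_smul_smul_eq_trace_smul (F := F) α fun g ↦ smul_one g]
      change ∑ g : G, g • α • (1 : M) ∈ adjoin K _
      rw [htrace]
      exact IntermediateField.smul_mem _ (one_mem _)
    · exact subset_adjoin K _ ⟨i, rfl⟩
  refine top_le_iff.1 (htop ▸ adjoin_le_iff.2 ?_)
  rintro _ ⟨i, rfl⟩
  exact hle (hspan ▸ Submodule.subset_span ⟨some i, rfl⟩)

end FieldExtension

theorem smulCommClass_of_smulDistribClass {G F K V : Type*} [Monoid G] [CommSemiring F]
    [Semiring K] [Algebra F K] [MulSemiringAction G K] [SMulCommClass G F K] [AddCommMonoid V]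
    [Module F V] [Module K V] [IsScalarTower F K V] [SMul G V] [SMulDistribClass G K V] :
    SMulCommClass G F V where
  smul_comm g c v := by
    rw [← algebraMap_smul K c v, smul_distrib_smul, smul_algebraMap, algebraMap_smul]

theorem noname_lemma_signed_permutation_case_general {ι G F K M : Type*} [Finite ι] [Group G]
    [Fintype G] [Field F] [Field K] [Field M] [Algebra F K] [Algebra K M] [Algebra F M]
    [IsScalarTower F K M] [IsGalois F K] (e : G ≃* Gal(K/F)) {α : K}
    (hα : LinearIndependent F fun σ : Gal(K/F) ↦ σ α) [MulSemiringAction G M]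
    (hactK : ∀ (g : G) (a : K), g • algebraMap K M a = algebraMap K M (e g a)) {x : ι → M}
    (hx : AlgebraicIndependent K x) (hx_top : IntermediateField.adjoin K (Set.range x) = ⊤)
    (hactX : ∀ (g : G) (i : ι), ∃ j, g • x i = x j ∨ g • x i = (x j)⁻¹) {y : ι → M}
    (hy : ∀ i, y i = ∑ g : G, g • (algebraMap K M α / (1 + x i))) :
    FixedPoints.subfield G M = (IntermediateField.adjoin F (Set.range y)).toSubfield ∧
      AlgebraicIndependent F y := by
  let : MulSemiringAction G K := MulSemiringAction.compHom K e.toMonoidHom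
  have : IsGaloisGroup G F K := .of_mulEquiv e fun _ _ ↦ rfl
  have : SMulDistribClass G K M := ⟨fun g a m ↦ by
    rw [Algebra.smul_def, smul_mul', hactK, Algebra.smul_def]; rfl⟩
  have : SMulCommClass G F M := smulCommClass_of_smulDistribClass (K := K)
  obtain rfl : y = fun i ↦ ∑ g : G, g • α • (1 + x i)⁻¹ :=
    funext fun i ↦ by simp only [hy, div_eq_mul_inv, Algebra.smul_def]
  have hz_top := (adjoin_range_inv_one_add (K := K) x).trans hx_top
  have hy_top := adjoin_sum_smul_eq_top_of_smul_mem_span (G := G)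
    (hα.comp e e.injective) (algebraicIndependent_of_adjoin_eq_top hx hz_top) hz_top
    fun g i ↦ (hactX g i).elim fun _ ↦ smul_inv_one_add_mem_span hx
  refine ⟨congrArg IntermediateField.toSubfield <|
    fixedPoints_eq_adjoin_of_adjoin_eq_top K (Set.forall_mem_range.2 fun i g ↦ smul_sum_smul g _)
      hy_top, ?_⟩
  exact (algebraicIndependent_of_adjoin_eq_top hx hy_top).restrictScalars
    (algebraMap F K).injective

section RationalFunctionField

variable (n : ℕ) (K : Type*) [Field K]

theorem ratFuncιK_eq_algebraMap :
    ratFuncιK n K = algebraMap K (FractionRing (MvPolynomial (Fin n) K)) := by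
  rw [IsScalarTower.algebraMap_eq K (MvPolynomial (Fin n) K)]
  rfl

theorem ratFuncιK_comp_algebraMap (F : Type*) [Field F] [Algebra F K] :
    (ratFuncιK n K).comp (algebraMap F K) =
      algebraMap F (FractionRing (MvPolynomial (Fin n) K)) := by
  rw [ratFuncιK_eq_algebraMap, ← IsScalarTower.algebraMap_eq]

theorem algebraicIndependent_ratFuncX : AlgebraicIndependent K (ratFuncX n K) :=
  (MvPolynomial.algebraicIndependent_X (Fin n) K).map'
    (f := IsScalarTower.toAlgHom K _ (FractionRing (MvPolynomial (Fin n) K)))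
    (IsFractionRing.injective _ _)

theorem adjoin_range_ratFuncX : IntermediateField.adjoin K (Set.range (ratFuncX n K)) = ⊤ := by
  let f := IsScalarTower.toAlgHom K (MvPolynomial (Fin n) K) (FractionRing (MvPolynomial (Fin n) K))
  have hf : f.range ≤ (IntermediateField.adjoin K (Set.range (ratFuncX n K))).toSubalgebra := by
    rw [← Algebra.map_top, ← MvPolynomial.adjoin_range_X, AlgHom.map_adjoin, ← Set.range_comp]
    exact IntermediateField.algebra_adjoin_le_adjoin K _
  refine top_le_iff.1 fun m _ ↦ ?_
  obtain ⟨p, q, _, rfl⟩ := IsFractionRing.div_surjective (A := MvPolynomial (Fin n) K) m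
  exact div_mem (hf ⟨p, rfl⟩) (hf ⟨q, rfl⟩)

end RationalFunctionField

/-- **Constructive no-name lemma, signed permutation case.**  Let `G` be a subgroup of the
group `𝔹_n` of `n × n` signed permutation matrices (each `g ∈ G` satisfies `g eᵢ = ± eⱼ` for
some `j`), let `K/F` be a finite Galois extension with Galois group identified with `G` via
`e : G ≃* Gal(K/F)`, and let `α ∈ K` be a normal element for `K/F`.  Let `G` act on
`K(x₁, …, xₙ)` through the Galois action on `K` and by `g(xᵢ) = x_{ρ_g(i)}` when
`g eᵢ = e_{ρ_g(i)}` and `g(xᵢ) = x_{ρ_g(i)}⁻¹` when `g eᵢ = -e_{ρ_g(i)}`, and set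
`yᵢ = ∑_{g ∈ G} g(α / (1 + xᵢ))`.  Then the fixed field of the `G`-action equals
`F(y₁, …, yₙ)`; in particular `y₁, …, yₙ` are algebraically independent over `F` (the
evaluation map `F[Y₁, …, Yₙ] → K(x₁, …, xₙ)`, `Yᵢ ↦ yᵢ`, is injective). -/
theorem noname_lemma_signed_permutation_case
    (n : ℕ) (hn : 0 < n) (G : Subgroup (Matrix.GeneralLinearGroup (Fin n) ℤ)) [Fintype G]
    (hGsigned : ∀ g : G, ∀ i : Fin n, ∃ j : Fin n,
      sgnPermCol (g : Matrix.GeneralLinearGroup (Fin n) ℤ) i = Pi.single j 1 ∨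
      sgnPermCol (g : Matrix.GeneralLinearGroup (Fin n) ℤ) i = - Pi.single j 1)
    (F K : Type*) [Field F] [Field K] [Algebra F K] [FiniteDimensional F K] [IsGalois F K]
    (e : G ≃* (K ≃ₐ[F] K)) (α : K) (hα : IsNormalElement F α)
    [MulSemiringAction G (FractionRing (MvPolynomial (Fin n) K))]
    (hactK : ∀ (g : G) (a : K), g • ratFuncιK n K a = ratFuncιK n K ((e g) a))
    (hactX : ∀ (g : G) (i j : Fin n),
      (sgnPermCol (g : Matrix.GeneralLinearGroup (Fin n) ℤ) i = Pi.single j 1 →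
        g • ratFuncX n K i = ratFuncX n K j) ∧
      (sgnPermCol (g : Matrix.GeneralLinearGroup (Fin n) ℤ) i = - Pi.single j 1 →
        g • ratFuncX n K i = (ratFuncX n K j)⁻¹))
    (y : Fin n → FractionRing (MvPolynomial (Fin n) K))
    (hy : ∀ i : Fin n, y i = ∑ g : G, g • (ratFuncιK n K α / (1 + ratFuncX n K i))) :
    FixedPoints.subfield G (FractionRing (MvPolynomial (Fin n) K)) =
      Subfield.closure
        (Set.range ((ratFuncιK n K).comp (algebraMap F K)) ∪ Set.range y) ∧
    Function.Injective
      (MvPolynomial.eval₂Hom ((ratFuncιK n K).comp (algebraMap F K)) y) := by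
  rw [ratFuncιK_eq_algebraMap] at hactK hy
  rw [ratFuncιK_comp_algebraMap]
  exact noname_lemma_signed_permutation_case_general e hα.1 hactK
    (algebraicIndependent_ratFuncX n K) (adjoin_range_ratFuncX n K)
    (fun g i ↦ (hGsigned g i).imp fun j ↦ .imp (hactX g i j).1 (hactX g i j).2) hy
end

section
/- Let K/F be a finite Galois extension with Galois group G, let n be a positive integer, and let M be an n×n matrix over K with columns M_1,…,M_n. Suppose there is a group homomorphism ρ : G → S_n (the symmetric group on {1,…,n}) such that for every g ∈ G and every i, applying g entrywise to the column M_i gives either M_{ρ(g)(i)} or −M_{ρ(g)(i)} (G permutes the columns of M up to sign). If the n entries of the first column M_1 are linearly independent over F, then M is invertible. -/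
/-!
By Artin's descent argument, a family `u` that is linearly independent over the fixed field of a
group `G` acting on `K` has orbit functions `g ↦ g • u k` that are linearly independent over `K`.
When the conjugates of a column `u` of `M` are combinations of columns of `M`, the orbit functions
of its entries are the image of the rows of `M` under one linear map, so the rows of `M` are
linearly independent as well.
-/

section

variable {A K : Type*} (G : Type*) [CommRing A] [Field K] [Algebra A K] [Group G]
  [MulSemiringAction G K] {ι : Type*}

theorem linearIndependent_mulAction_toFun_comp {u : ι → K}
    (hu : LinearIndependent (FixedPoints.subfield G K) u) :
    LinearIndependent K (MulAction.toFun G K ∘ u) := by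
  rw [← linearIndepOn_range_iff hu.injective, linearIndepOn_iff_linearIndepOn_finset]
  exact fun s hs ↦ FixedPoints.linearIndependent_smul_of_linearIndependent G K <|
    hu.linearIndepOn_id.mono hs

theorem linearIndependent_fixedPoints_subfield [Algebra.IsInvariant A K G] {u : ι → K}
    (hu : LinearIndependent A u) : LinearIndependent (FixedPoints.subfield G K) u := by
  choose toBase algebraMap_toBase using fun x : FixedPoints.subfield G K ↦
    Algebra.IsInvariant.isInvariant (A := A) (G := G) (x : K) x.2
  refine hu.map_of_injective_injective toBase (.id K) (fun x hx ↦ ?_) (fun _ ↦ id) fun x y ↦ ?_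
  · ext
    rw [← algebraMap_toBase, hx, map_zero, ZeroMemClass.coe_zero]
  · rw [AddMonoidHom.id_apply, AddMonoidHom.id_apply, Algebra.smul_def, algebraMap_toBase,
      Subfield.smul_def, smul_eq_mul]

variable {G}

theorem linearIndependent_row_of_smul_col_mem_span {κ : Type*} [Algebra.IsInvariant A K G]
    (M : Matrix ι κ K) (j : κ)
    (hconj : ∀ g : G, (fun k ↦ g • M k j) ∈ Submodule.span K (Set.range M.col))
    (hind : LinearIndependent A (M.col j)) : LinearIndependent K M.row := by
  choose c hc using fun g ↦ Finsupp.mem_span_range_iff_exists_finsupp.mp (hconj g)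
  let T : (κ → K) →ₗ[K] G → K := .pi fun g ↦ ∑ i ∈ (c g).support, c g i • .proj i
  have horbit : T ∘ M.row = MulAction.toFun G K ∘ M.col j := by
    ext k g
    simpa [T, Finsupp.sum] using congrFun (hc g) k
  refine .of_comp T ?_
  rw [horbit]
  exact linearIndependent_mulAction_toFun_comp G (linearIndependent_fixedPoints_subfield G hind)

theorem matrix_invertible_of_columns_permuted_up_to_sign_general [Fintype ι] [DecidableEq ι]
    [Algebra.IsInvariant A K G] (M : Matrix ι ι K) (j : ι)
    (hconj : ∀ g : G, (fun k ↦ g • M k j) ∈ Submodule.span K (Set.range M.col))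
    (hind : LinearIndependent A (M.col j)) : IsUnit M :=
  Matrix.linearIndependent_rows_iff_isUnit.mp <|
    linearIndependent_row_of_smul_col_mem_span M j hconj hind

end

/-- Let `K/F` be a finite Galois extension with Galois group `G = K ≃ₐ[F] K`, and let `M` be
an `n × n` matrix over `K`.  Suppose `G` permutes the columns of `M` up to sign, via a group
homomorphism `ρ : G →* S_n`: applying `g` entrywise to the `i`-th column of `M` yields either
the `ρ(g)(i)`-th column or its negative.  If the entries of the first column of `M` are
`F`-linearly independent, then `M` is invertible. -/
theorem matrix_invertible_of_columns_permuted_up_to_sign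
    (F K : Type*) [Field F] [Field K] [Algebra F K] [FiniteDimensional F K] [IsGalois F K]
    (n : ℕ) (hn : 0 < n) (M : Matrix (Fin n) (Fin n) K)
    (ρ : (K ≃ₐ[F] K) →* Equiv.Perm (Fin n))
    (hperm : ∀ (g : K ≃ₐ[F] K) (i : Fin n),
      (∀ k : Fin n, g (M k i) = M k (ρ g i)) ∨ (∀ k : Fin n, g (M k i) = - M k (ρ g i)))
    (hind : LinearIndependent F (fun k : Fin n => M k ⟨0, hn⟩)) :
    IsUnit M := by
  refine matrix_invertible_of_columns_permuted_up_to_sign_general (G := K ≃ₐ[F] K) M ⟨0, hn⟩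
    (fun g ↦ (hperm g ⟨0, hn⟩).elim (fun h ↦ ?_) fun h ↦ neg_mem_iff.mp ?_) hind
  all_goals exact Submodule.subset_span ⟨ρ g ⟨0, hn⟩, funext fun k ↦ by simp [h]⟩
end

section
/- Let K/F be a finite Galois extension with Galois group G, let n be a positive integer, and let M be an n×n matrix over K with columns M_1,…,M_n. Suppose there is a group homomorphism ρ : G → S_n such that for every g ∈ G and every i, applying g entrywise to the column M_i gives M_{ρ(g)(i)}, and suppose the n entries of M_1 are linearly independent over F. Let H = {g ∈ G : g(M_1) = M_1} be the stabilizer of the first column. Then the index [G : H] equals n, and the orbit of M_1 under the entrywise G-action has exactly n elements; in particular the induced action of G on the set of columns {M_1,…,M_n} is transitive. -/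
/-!
Let `v` be a column with linearly independent entries. By Artin's argument the functions
`g ↦ g • v k` on `G` are linearly independent over `K`, one for each entry `k`. They depend on `g`
only through `g • v`, hence are functions on the orbit of `v`, which therefore has at least as many
points as `v` has entries. As the orbit consists of columns of a square matrix, it contains them
all, without repetition.
-/

section FixedField

open MulAction

variable {A G K ι : Type*} [CommSemiring A] [Field K] [Algebra A K] [Group G]
  [MulSemiringAction G K] {v : ι → K}

theorem linearIndependent_fixedPoints_subfield_of_isInvariant [Algebra.IsInvariant A K G]
    (hv : LinearIndependent A v) :
    LinearIndependent (FixedPoints.subfield G K) v := by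
  choose lift hlift using fun x : FixedPoints.subfield G K =>
    Algebra.IsInvariant.isInvariant (A := A) (G := G) (x : K) x.2
  have lift_injective : Function.Injective lift := fun x y hxy =>
    Subtype.ext <| by rw [← hlift x, ← hlift y, hxy]
  refine hv.map_of_injective_injectiveₛ lift (AddMonoidHom.id K) lift_injective
    Function.injective_id fun x y => ?_
  simp only [AddMonoidHom.id_apply, Algebra.smul_def, hlift, FixedPoints.coe_algebraMap,
    Subfield.coe_subtype]

theorem linearIndependent_conjugates (hv : LinearIndependent (FixedPoints.subfield G K) v) :
    LinearIndependent K fun (k : ι) (g : G) => g • v k := by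
  classical
  refine linearIndependent_iff_finset_linearIndependent.2 fun s => ?_
  have hs : LinearIndepOn (FixedPoints.subfield G K) id (s.image v : Set K) := by
    rw [Finset.coe_image]
    exact (hv.linearIndepOn s).id_image
  have hconj := FixedPoints.linearIndependent_smul_of_linearIndependent G K hs
  exact hconj.comp (fun k : s => ⟨v k, Finset.mem_image_of_mem v k.2⟩) fun k l hkl =>
    Subtype.ext <| hv.injective <| congrArg Subtype.val hkl

theorem linearIndependent_orbit_coordinates
    (hv : LinearIndependent (FixedPoints.subfield G K) v) :
    LinearIndependent K fun (k : ι) (u : orbit G v) => (u : ι → K) k :=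
  .of_comp (LinearMap.funLeft K K fun g : G => (⟨g • v, mem_orbit v g⟩ : orbit G v))
    (linearIndependent_conjugates hv)

theorem card_le_ncard_orbit_of_linearIndependent [Fintype ι] (hfin : (orbit G v).Finite)
    (hv : LinearIndependent (FixedPoints.subfield G K) v) :
    Fintype.card ι ≤ (orbit G v).ncard := by
  have := hfin.fintype
  calc
    Fintype.card ι ≤ Module.finrank K (orbit G v → K) :=
      (linearIndependent_orbit_coordinates hv).fintype_card_le_finrank
    _ = (orbit G v).ncard := by
      rw [Module.finrank_fintype_fun_eq_card, Set.fintypeCard_eq_ncard]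

theorem index_stabilizer_eq_and_orbit_card_eq_of_columns_permuted_general
    [Algebra.IsInvariant A K G] [Fintype ι] (M : Matrix ι ι K) (i₀ : ι)
    (hperm : ∀ g : G, ∃ j, ∀ k, g • M k i₀ = M k j)
    (hind : LinearIndependent A fun k => M k i₀) :
    (stabilizer G fun k => M k i₀).index = Fintype.card ι ∧
    (orbit G fun k => M k i₀).ncard = Fintype.card ι ∧
    ∀ i j, ∃ g : G, ∀ k, g • M k i = M k j := by
  have orbit_subset : orbit G (M.col i₀) ⊆ Set.range M.col := by
    rintro _ ⟨g, rfl⟩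
    obtain ⟨j, hj⟩ := hperm g
    exact ⟨j, funext fun k => (hj k).symm⟩
  have range_le : (Set.range M.col).ncard ≤ Fintype.card ι := by
    rw [← Set.image_univ, ← Nat.card_eq_fintype_card, ← Set.ncard_univ]
    exact Set.ncard_image_le
  have le_orbit : Fintype.card ι ≤ (orbit G (M.col i₀)).ncard :=
    card_le_ncard_orbit_of_linearIndependent ((Set.finite_range _).subset orbit_subset)
      (linearIndependent_fixedPoints_subfield_of_isInvariant hind)
  have orbit_eq : orbit G (M.col i₀) = Set.range M.col :=
    Set.eq_of_subset_of_ncard_le orbit_subset (range_le.trans le_orbit)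
  have card_orbit : (orbit G (M.col i₀)).ncard = Fintype.card ι :=
    le_antisymm (orbit_eq ▸ range_le) le_orbit
  refine ⟨(index_stabilizer G _).trans card_orbit, card_orbit, fun i j => ?_⟩
  have col_mem (l : ι) : M.col l ∈ orbit G (M.col i₀) := orbit_eq ▸ Set.mem_range_self l
  obtain ⟨g, hg⟩ : M.col j ∈ orbit G (M.col i) := orbit_eq_iff.2 (col_mem i) ▸ col_mem j
  exact ⟨g, congrFun hg⟩

end FixedField

/-- Let `K/F` be a finite Galois extension with Galois group `G = K ≃ₐ[F] K`, and let `M` be an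
`n × n` matrix over `K` whose columns are permuted (exactly, without signs) by the entrywise
action of `G`, via a group homomorphism `ρ : G →* S_n`.  Assume the entries of the first column
`M₁` are `F`-linearly independent, and let `H` be the stabilizer of `M₁` in `G`.  Then
`[G : H] = n`, the orbit of `M₁` under the entrywise `G`-action has exactly `n` elements, and
the induced action of `G` on the set of columns of `M` is transitive. -/
theorem index_stabilizer_eq_and_orbit_card_eq_of_columns_permuted
    (F K : Type*) [Field F] [Field K] [Algebra F K] [FiniteDimensional F K] [IsGalois F K]
    (n : ℕ) (hn : 0 < n) (M : Matrix (Fin n) (Fin n) K)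
    (ρ : (K ≃ₐ[F] K) →* Equiv.Perm (Fin n))
    (hperm : ∀ (g : K ≃ₐ[F] K) (i : Fin n) (k : Fin n), g (M k i) = M k (ρ g i))
    (hind : LinearIndependent F (fun k : Fin n => M k ⟨0, hn⟩)) :
    (MulAction.stabilizer (K ≃ₐ[F] K) (fun k : Fin n => M k ⟨0, hn⟩)).index = n ∧
    (MulAction.orbit (K ≃ₐ[F] K) (fun k : Fin n => M k ⟨0, hn⟩)).ncard = n ∧
    (∀ i j : Fin n, ∃ g : K ≃ₐ[F] K, ∀ k : Fin n, g (M k i) = M k j) := by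
  simpa only [Fintype.card_fin, AlgEquiv.smul_def] using
    index_stabilizer_eq_and_orbit_card_eq_of_columns_permuted_general (A := F)
      (G := K ≃ₐ[F] K) M ⟨0, hn⟩ (fun g => ⟨ρ g ⟨0, hn⟩, hperm g ⟨0, hn⟩⟩) hind
end

section
/- Let n be a positive integer, let G be a subgroup of the group 𝕊_n of n×n permutation matrices such that the induced action of G on {1,…,n} via g ↦ ρ_g is transitive, and let K/F be a finite Galois extension with Gal(K/F) identified with G. Let α ∈ K be a normal element for K/F. Then the n×n matrix M = [m_{i,j}] with entries m_{i,j} = Σ_{g ∈ G, ρ_g(i) = j} g(α) is invertible. -/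
/-!
Write `M` for the matrix. Then `(M v)(x) = ∑ g, g(α) v(g x)`, so a vector `v` in the kernel of `M`
satisfies, at the point `h⁻¹ x`, the relation `∑ k, v(k x) k(h(α)) = 0`. As `h` varies the
conjugates `h(α)` span `K` over `F`, hence `∑ k, v(k x) k = 0` as a map `K → K`, and Dedekind's
independence of automorphisms gives `v(k x) = 0` for all `k`, in particular `v(x) = 0`.
-/

theorem linearIndependent_algHom_comp_of_span_eq_top {R A B ι : Type*} [CommSemiring R]
    [Semiring A] [Algebra R A] [CommRing B] [IsDomain B] [Algebra R B] {a : ι → A}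
    (ha : Submodule.span R (Set.range a) = ⊤) :
    LinearIndependent B (fun (σ : A →ₐ[R] B) (i : ι) => σ (a i)) := by
  let evalFamily : (A →ₗ[R] B) →ₗ[B] (ι → B) :=
    LinearMap.funLeft B B a ∘ₗ LinearMap.ltoFun R A B B
  have evalFamily_injective : Function.Injective evalFamily := fun _ _ h =>
    LinearMap.ext_on_range ha (congrFun h)
  exact (linearIndependent_toLinearMap R A B).map_injOn evalFamily evalFamily_injective.injOn

section ActionMatrix

variable {G : Type*} [Fintype G] (X : Type*) [DecidableEq X]

/-- The matrix by which the element `∑ g, a g • g` of the group algebra acts on functions on the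
`G`-set `X`, where `g` acts by `v ↦ fun x => v (g • x)`. -/
def actionMatrix {R : Type*} [AddCommMonoid R] [SMul G X] (a : G → R) : Matrix X X R :=
  Matrix.of fun x y => ∑ g with g • x = y, a g

variable {X} [Fintype X]

theorem actionMatrix_mulVec {R : Type*} [NonUnitalNonAssocSemiring R] [SMul G X] (a : G → R)
    (v : X → R) (x : X) : (actionMatrix X a).mulVec v x = ∑ g, a g * v (g • x) := by
  simp only [actionMatrix, Matrix.mulVec, dotProduct, Matrix.of_apply, Finset.sum_mul]
  rw [← Finset.sum_fiberwise Finset.univ (fun g : G => g • x)]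
  refine Finset.sum_congr rfl fun y _ => Finset.sum_congr rfl fun g hg => ?_
  rw [(Finset.mem_filter.mp hg).2]

theorem isUnit_actionMatrix_of_linearIndependent {K : Type*} [Field K] [Group G] [MulAction G X]
    {a : G → K} (ha : LinearIndependent K (fun k h : G => a (k * h))) :
    IsUnit (actionMatrix X a) := by
  rw [← Matrix.mulVec_injective_iff_isUnit]
  refine (injective_iff_map_eq_zero (actionMatrix X a).mulVecLin).mpr fun v hv => funext fun x => ?_
  have relation : ∑ k : G, v (k • x) • (fun h : G => a (k * h)) = 0 := by
    ext h
    calc (∑ k : G, v (k • x) • (fun h : G => a (k * h))) h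
        = ∑ k : G, a (k * h) * v ((k * h) • h⁻¹ • x) := by simp [mul_smul, mul_comm]
      _ = ∑ g : G, a g * v (g • h⁻¹ • x) :=
          Equiv.sum_comp (Equiv.mulRight h) fun g => a g * v (g • h⁻¹ • x)
      _ = (actionMatrix X a).mulVec v (h⁻¹ • x) := (actionMatrix_mulVec a v _).symm
      _ = 0 := congrFun hv _
  simpa only [one_smul, Pi.zero_apply] using Fintype.linearIndependent_iff.mp ha _ relation 1

end ActionMatrix

theorem coordinate_matrix_invertible_of_transitive_general {G X F K : Type*} [Group G] [Fintype G]
    [Fintype X] [DecidableEq X] [MulAction G X] [Field F] [Field K] [Algebra F K]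
    (e : G ≃* (K ≃ₐ[F] K)) {α : K} (hα : IsNormalElement F α) :
    IsUnit (actionMatrix X fun g : G => e g α) := by
  have conjugates_span : Submodule.span F (Set.range fun h : G => e h α) = ⊤ := by
    rw [← hα.2]
    exact congrArg _ (e.surjective.range_comp fun τ : K ≃ₐ[F] K => τ α)
  have automorphisms_distinct : Function.Injective fun g : G => (e g : K →ₐ[F] K) :=
    AlgEquiv.coe_toAlgHom_injective.comp e.injective
  apply isUnit_actionMatrix_of_linearIndependent
  simpa only [map_mul, AlgEquiv.mul_apply, Function.comp_def, AlgEquiv.coe_toAlgHom] using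
    (linearIndependent_algHom_comp_of_span_eq_top conjugates_span).comp _ automorphisms_distinct

/-- Let `G` be a subgroup of the group `𝕊_n ≅ S_n` of `n × n` permutation matrices (a
permutation matrix `g` is identified with the permutation `ρ_g` sending `i` to `j` when
`g eᵢ = eⱼ`) acting transitively on `{1, …, n}`, let `K/F` be a finite Galois extension with
Galois group identified with `G` via `e : G ≃* Gal(K/F)`, and let `α ∈ K` be a normal element
for `K/F`.  Then the `n × n` matrix with entries `m_{i,j} = ∑_{g ∈ G, ρ_g(i) = j} g(α)` is
invertible. -/
theorem coordinate_matrix_invertible_of_transitive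
    (n : ℕ) (hn : 0 < n) (G : Subgroup (Equiv.Perm (Fin n))) [Fintype G]
    (htrans : ∀ i j : Fin n, ∃ g : G, (g : Equiv.Perm (Fin n)) i = j)
    (F K : Type*) [Field F] [Field K] [Algebra F K] [FiniteDimensional F K] [IsGalois F K]
    (e : G ≃* (K ≃ₐ[F] K)) (α : K) (hα : IsNormalElement F α) :
    IsUnit (Matrix.of fun i j : Fin n =>
      ∑ g ∈ Finset.univ.filter (fun g : G => (g : Equiv.Perm (Fin n)) i = j), (e g) α) := by
  exact coordinate_matrix_invertible_of_transitive_general e hα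
end

section
/- Let n be a positive integer, let G be a subgroup of the group 𝔹_n of n×n signed permutation matrices, and let K/F be a finite Galois extension with Gal(K/F) identified with G. Let α ∈ K. For i,j ∈ {1,…,n} define G^+_{i,j} = {g ∈ G : g e_i = e_j}, G^-_{i,j} = {g ∈ G : g e_i = −e_j}, and m_{i,j} = Σ_{g ∈ G^+_{i,j}} g(α) − Σ_{g ∈ G^-_{i,j}} g(α). Then for every h ∈ G and all i,j ∈ {1,…,n}: if h e_j = e_{ρ_h(j)} then h(m_{i,j}) = m_{i,ρ_h(j)}, and if h e_j = −e_{ρ_h(j)} then h(m_{i,j}) = −m_{i,ρ_h(j)}; that is, G permutes the columns of the matrix M = [m_{i,j}] up to sign. -/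
section TransporterSum

variable {G V A : Type*} [Group G] [Fintype G] [DecidableEq V]

section MulAction

variable [MulAction G V] [AddCommMonoid A] [DistribMulAction G A]

variable (G) in
/-- The sum of the conjugates `g • a` over the transporter `{g | g • x = v}` of `x` to `v`. -/
def transporterSum (a : A) (x v : V) : A :=
  ∑ g : G with g • x = v, g • a

/- Left multiplication by `h` carries the transporter of `x` to `v` onto the transporter of `x` to
`h • v`. -/
theorem smul_transporterSum (h : G) (a : A) (x v : V) :
    h • transporterSum G a x v = transporterSum G a x (h • v) := by
  simp only [transporterSum, Finset.smul_sum]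
  refine Finset.sum_equiv (Equiv.mulLeft h) (fun g => ?_) (fun g _ => ?_)
  · simp only [Finset.mem_filter_univ, Equiv.coe_mulLeft, mul_smul, smul_left_cancel_iff]
  · simp only [Equiv.coe_mulLeft, mul_smul]

end MulAction

section Neg

variable [MulAction G V] [AddCommGroup A] [DistribMulAction G A]

variable (G) in
/-- The conjugates of `a` summed over the `g` with `g • x = v`, minus those with `g • x = -v`.
The entry `m_{i,j}` is the case `x = eᵢ`, `v = eⱼ`. -/
def signedTransporterSum [Neg V] (a : A) (x v : V) : A :=
  transporterSum G a x v - transporterSum G a x (-v)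

theorem signedTransporterSum_neg [InvolutiveNeg V] (a : A) (x v : V) :
    signedTransporterSum G a x (-v) = -signedTransporterSum G a x v := by
  simp only [signedTransporterSum, neg_neg, neg_sub]

end Neg

variable [AddGroup V] [DistribMulAction G V] [AddCommGroup A] [DistribMulAction G A]

theorem smul_signedTransporterSum (h : G) (a : A) (x v : V) :
    h • signedTransporterSum G a x v = signedTransporterSum G a x (h • v) := by
  simp only [signedTransporterSum, smul_sub, smul_transporterSum, smul_neg]

theorem galois_permutes_columns_up_to_sign_general (a : A) (x v w : V) (h : G) :
    (h • v = w → h • signedTransporterSum G a x v = signedTransporterSum G a x w) ∧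
      (h • v = -w → h • signedTransporterSum G a x v = -signedTransporterSum G a x w) := by
  rw [smul_signedTransporterSum]
  constructor
  · rintro rfl
    rfl
  · intro hv
    rw [hv, signedTransporterSum_neg]

end TransporterSum

/-- Let `G` be a subgroup of the group `𝔹_n` of `n × n` signed permutation matrices (each
`g ∈ G` satisfies `g eᵢ = ± eⱼ` for some `j`), and let `K/F` be a finite Galois extension
whose Galois group is identified with `G` via `e : G ≃* Gal(K/F)`.  Let `α ∈ K` and set
`m_{i,j} = ∑_{g ∈ G, g eᵢ = eⱼ} g(α) - ∑_{g ∈ G, g eᵢ = -eⱼ} g(α)`.  Then for every `h ∈ G`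
and all `i, j, j'`: if `h eⱼ = eⱼ'` then `h(m_{i,j}) = m_{i,j'}`, and if `h eⱼ = -eⱼ'` then
`h(m_{i,j}) = -m_{i,j'}`; that is, `G` permutes the columns of `M = [m_{i,j}]` up to sign. -/
theorem galois_permutes_columns_up_to_sign
    (n : ℕ) (hn : 0 < n) (G : Subgroup (Matrix.GeneralLinearGroup (Fin n) ℤ)) [Fintype G]
    (hGsigned : ∀ g : G, ∀ i : Fin n, ∃ j : Fin n,
      sgnPermCol (g : Matrix.GeneralLinearGroup (Fin n) ℤ) i = Pi.single j 1 ∨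
      sgnPermCol (g : Matrix.GeneralLinearGroup (Fin n) ℤ) i = - Pi.single j 1)
    (F K : Type*) [Field F] [Field K] [Algebra F K] [FiniteDimensional F K] [IsGalois F K]
    (e : G ≃* (K ≃ₐ[F] K)) (α : K)
    (m : Fin n → Fin n → K)
    (hm : ∀ i j : Fin n, m i j =
      (∑ g ∈ Finset.univ.filter (fun g : G =>
        sgnPermCol (g : Matrix.GeneralLinearGroup (Fin n) ℤ) i = Pi.single j 1), (e g) α) -
      (∑ g ∈ Finset.univ.filter (fun g : G =>
        sgnPermCol (g : Matrix.GeneralLinearGroup (Fin n) ℤ) i = - Pi.single j 1), (e g) α)) :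
    ∀ (h : G) (i j j' : Fin n),
      (sgnPermCol (h : Matrix.GeneralLinearGroup (Fin n) ℤ) j = Pi.single j' 1 →
        (e h) (m i j) = m i j') ∧
      (sgnPermCol (h : Matrix.GeneralLinearGroup (Fin n) ℤ) j = - Pi.single j' 1 →
        (e h) (m i j) = - m i j') := by
  open scoped Matrix.Module in
  let : DistribMulAction G K := .compHom K e.toMonoidHom
  -- `Matrix.Module` makes `g • v` definitionally `g *ᵥ v`, so `g • eᵢ` unfolds to `sgnPermCol g i`.
  have m_eq (i j : Fin n) :
      m i j = signedTransporterSum G α (Pi.single i 1 : Fin n → ℤ) (Pi.single j 1) := hm i j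
  intro h i j j'
  rw [m_eq, m_eq]
  exact galois_permutes_columns_up_to_sign_general α _ _ _ h
end

section
/- Let n be a positive integer, let G be a subgroup of the group 𝔹_n of n×n signed permutation matrices such that the induced action of G on {1,…,n} via g ↦ ρ_g is transitive, and let K/F be a finite Galois extension with Gal(K/F) identified with G. Let α ∈ K be a normal element for K/F. Then the n×n matrix M = [m_{i,j}] with entries m_{i,j} = Σ_{g ∈ G, g e_i = e_j} g(α) − Σ_{g ∈ G, g e_i = −e_j} g(α) is invertible. -/
/-!
The transpose of the matrix is the image of `a = ∑ g, g(α) g ∈ K[G]` under the `K`-algebra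
homomorphism `K[G] → Mₙ(K)` that extends the inclusion of `G` into `Mₙ(ℤ)`, so it suffices that
`a` is a unit. As `K[G]` is Artinian, this holds once `x * a = 0` forces `x = 0`. The coefficient
of `x * a` at `h` is the value at `h(α)` of the `K`-linear combination `∑ g, x(g) g⁻¹` of
automorphisms. If all of these vanish, so does the combination, because the `h(α)` span `K` over
`F`; then `x = 0` by Dedekind's independence of automorphisms.
-/

open Matrix MonoidAlgebra

section GroupAlgebra

variable {G F : Type*} [Group G] [Fintype G] [CommSemiring F]

lemma eq_zero_of_sum_mul_conjugates_eq_zero {K : Type*} [CommRing K] [IsDomain K] [Algebra F K]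
    {φ : G →* (K ≃ₐ[F] K)} (hφ : Function.Injective φ) {α : K}
    (hα : Submodule.span F (Set.range fun g => φ g α) = ⊤) {c : G → K}
    (hc : ∀ h, ∑ g, c g * φ (g⁻¹ * h) α = 0) : c = 0 := by
  have hzero : ∑ g, c g • (φ g⁻¹).toAlgHom.toLinearMap = 0 :=
    LinearMap.ext_on_range hα fun h => by simpa using hc h
  have hinj : Function.Injective fun g => (φ g⁻¹).toAlgHom := fun g h hgh =>
    inv_injective (hφ (AlgEquiv.ext fun x => DFunLike.congr_fun hgh x))
  have hindep := (linearIndependent_toLinearMap F K K).comp _ hinj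
  exact funext (Fintype.linearIndependent_iff.1 hindep c hzero)

variable {K : Type*} [Field K] [Algebra F K]

lemma isUnit_sum_single_conjugates {φ : G →* (K ≃ₐ[F] K)} (hφ : Function.Injective φ)
    {α : K} (hα : Submodule.span F (Set.range fun g => φ g α) = ⊤) :
    IsUnit (∑ g, single g (φ g α)) := by
  classical
  have : IsArtinianRing K[G] := IsArtinianRing.of_finite K K[G]
  rw [IsArtinianRing.isUnit_iff_isRightRegular, isRightRegular_iff_left_eq_zero_of_mul]
  intro x hx
  suffices hcoeff : (x.coeff : G → K) = 0 from
    MonoidAlgebra.ext (DFunLike.coe_injective hcoeff)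
  refine eq_zero_of_sum_mul_conjugates_eq_zero hφ hα fun h => ?_
  have hxh : (x * ∑ g, single g (φ g α)).coeff h = 0 := by rw [hx, coeff_zero, Finsupp.zero_apply]
  simpa [coeff_mul_apply_left, Finsupp.sum_fintype, coeff_single, Finsupp.single_apply] using hxh

lemma isUnit_sum_conjugates_smul {A : Type*} [Semiring A] [Algebra K A] (ρ : G →* A)
    {φ : G →* (K ≃ₐ[F] K)} (hφ : Function.Injective φ)
    {α : K} (hα : Submodule.span F (Set.range fun g => φ g α) = ⊤) :
    IsUnit (∑ g, φ g α • ρ g) := by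
  simpa [lift_single] using (isUnit_sum_single_conjugates hφ hα).map (lift K A G ρ)

end GroupAlgebra

section SignedUnitVectors

variable {ι R : Type*} [DecidableEq ι] [Ring R]

/-- `v` is `±eₖ` for some standard basis vector `eₖ`: the signed permutation matrices are the
invertible matrices all of whose columns are of this form. -/
def IsSignedUnitVector (v : ι → R) : Prop :=
  ∃ k, v = Pi.single k 1 ∨ v = -Pi.single k 1

namespace IsSignedUnitVector

variable {v : ι → R}

lemma neg (hv : IsSignedUnitVector v) : IsSignedUnitVector (-v) :=
  hv.imp fun k hk => by rwa [neg_inj, neg_eq_iff_eq_neg, or_comm]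

lemma apply_eq_zero_or_one_or_neg_one (hv : IsSignedUnitVector v) (j : ι) :
    v j = 0 ∨ v j = 1 ∨ v j = -1 := by
  obtain ⟨k, rfl | rfl⟩ := hv <;> obtain rfl | hkj := eq_or_ne j k <;> simp_all

lemma eq_single_iff_apply_eq_one (hv : IsSignedUnitVector v) (hR : (-1 : R) ≠ 1) (j : ι) :
    v = Pi.single j 1 ↔ v j = 1 := by
  have hone : (1 : R) ≠ 0 := fun h => hR (by simp [h])
  refine ⟨fun h => by simp [h], fun h => ?_⟩
  obtain ⟨k, rfl | rfl⟩ := hv <;> obtain rfl | hkj := eq_or_ne j k <;> simp_all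

lemma eq_neg_single_iff_apply_eq_neg_one (hv : IsSignedUnitVector v) (hR : (-1 : R) ≠ 1) (j : ι) :
    v = -Pi.single j 1 ↔ v j = -1 := by
  simpa [neg_eq_iff_eq_neg] using hv.neg.eq_single_iff_apply_eq_one hR j

end IsSignedUnitVector

lemma sum_filter_single_sub_sum_filter_neg_single [DecidableEq (ι → R)] {κ M : Type*}
    [Fintype κ] [AddCommGroup M] [Module R M] (hR : (-1 : R) ≠ 1) {v : κ → ι → R}
    (hv : ∀ g, IsSignedUnitVector (v g)) (f : κ → M) (j : ι) :
    (∑ g with v g = Pi.single j 1, f g) - (∑ g with v g = -Pi.single j 1, f g) =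
      ∑ g, v g j • f g := by
  have hone : (1 : R) ≠ 0 := fun h => hR (by simp [h])
  rw [Finset.sum_filter, Finset.sum_filter, ← Finset.sum_sub_distrib]
  refine Finset.sum_congr rfl fun g _ => ?_
  rcases (hv g).apply_eq_zero_or_one_or_neg_one j with hvj | hvj | hvj <;>
    simp [(hv g).eq_single_iff_apply_eq_one hR,
      (hv g).eq_neg_single_iff_apply_eq_neg_one hR, hvj, hR, hR.symm, hone, hone.symm]

end SignedUnitVectors

theorem signed_coordinate_matrix_invertible_of_transitive_general {ι G F K : Type*} [Fintype ι]
    [DecidableEq ι] [Group G] [Fintype G] [CommSemiring F] [Field K] [Algebra F K]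
    {ρ : G →* Matrix ι ι ℤ} (hρ : ∀ g i, IsSignedUnitVector (ρ g *ᵥ Pi.single i 1))
    {φ : G →* (K ≃ₐ[F] K)} (hφ : Function.Injective φ)
    {α : K} (hα : Submodule.span F (Set.range fun g => φ g α) = ⊤) :
    IsUnit (Matrix.of fun i j : ι =>
      (∑ g with ρ g *ᵥ Pi.single i 1 = Pi.single j 1, φ g α) -
      (∑ g with ρ g *ᵥ Pi.single i 1 = -Pi.single j 1, φ g α)) := by
  let ρK : G →* Matrix ι ι K := (Int.castRingHom K).mapMatrix.toMonoidHom.comp ρ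
  rw [← isUnit_transpose]
  convert isUnit_sum_conjugates_smul ρK hφ hα using 1
  ext j i
  rw [transpose_apply, Matrix.of_apply,
    sum_filter_single_sub_sum_filter_neg_single (by decide) (fun g => hρ g i)]
  simp [ρK, Matrix.sum_apply, mul_comm]

/-- Let `G` be a subgroup of the group `𝔹_n` of `n × n` signed permutation matrices (each
`g ∈ G` satisfies `g eᵢ = ± eⱼ` for some `j`) whose induced action on `{1, …, n}` is
transitive, let `K/F` be a finite Galois extension with Galois group identified with `G` via
`e : G ≃* Gal(K/F)`, and let `α ∈ K` be a normal element for `K/F`.  Then the `n × n` matrix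
with entries `m_{i,j} = ∑_{g ∈ G, g eᵢ = eⱼ} g(α) - ∑_{g ∈ G, g eᵢ = -eⱼ} g(α)` is
invertible. -/
theorem signed_coordinate_matrix_invertible_of_transitive
    (n : ℕ) (hn : 0 < n) (G : Subgroup (Matrix.GeneralLinearGroup (Fin n) ℤ)) [Fintype G]
    (hGsigned : ∀ g : G, ∀ i : Fin n, ∃ j : Fin n,
      sgnPermCol (g : Matrix.GeneralLinearGroup (Fin n) ℤ) i = Pi.single j 1 ∨
      sgnPermCol (g : Matrix.GeneralLinearGroup (Fin n) ℤ) i = - Pi.single j 1)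
    (htrans : ∀ i j : Fin n, ∃ g : G,
      sgnPermCol (g : Matrix.GeneralLinearGroup (Fin n) ℤ) i = Pi.single j 1 ∨
      sgnPermCol (g : Matrix.GeneralLinearGroup (Fin n) ℤ) i = - Pi.single j 1)
    (F K : Type*) [Field F] [Field K] [Algebra F K] [FiniteDimensional F K] [IsGalois F K]
    (e : G ≃* (K ≃ₐ[F] K)) (α : K) (hα : IsNormalElement F α) :
    IsUnit (Matrix.of fun i j : Fin n =>
      (∑ g ∈ Finset.univ.filter (fun g : G =>
        sgnPermCol (g : Matrix.GeneralLinearGroup (Fin n) ℤ) i = Pi.single j 1), (e g) α) -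
      (∑ g ∈ Finset.univ.filter (fun g : G =>
        sgnPermCol (g : Matrix.GeneralLinearGroup (Fin n) ℤ) i = - Pi.single j 1), (e g) α)) := by
  have hspan : Submodule.span F (Set.range fun g => e g α) = ⊤ :=
    (congrArg (Submodule.span F) (e.surjective.range_comp (· α))).trans hα.2
  exact signed_coordinate_matrix_invertible_of_transitive_general
    (ρ := (Units.coeHom _).comp G.subtype) hGsigned (φ := e.toMonoidHom) e.injective hspan
end

section
/- Let n be a positive integer, let G be a subgroup of the group 𝕊_n of n×n permutation matrices such that the induced action of G on {1,…,n} via g ↦ ρ_g is transitive, and let K/F be a finite Galois extension with Gal(K/F) identified with G. Let α ∈ K be a normal element for K/F, and for i = 1,…,n set y_i = Σ_{g ∈ G} g(α)·x_{ρ_g(i)} ∈ K[x_1,…,x_n]. Then K[y_1,…,y_n] = K[x_1,…,x_n], i.e., the y_i generate the full polynomial ring over K; equivalently, the K-linear change of variables sending (x_1,…,x_n) to (y_1,…,y_n) is invertible. -/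
/-!
For `h ∈ G` the substitution `k = g h` gives `y_{h i} = ∑ₖ (k h⁻¹)(α) x_{k i}`, so on each orbit the
`y`'s arise from the `x`'s through the `G × G` matrix `((k h⁻¹)(α))`. A kernel vector `d` of this
matrix makes the `K`-linear combination `∑ₖ dₖ k` of automorphisms vanish at every conjugate of `α`.
The conjugates span `K`, so the combination is zero, and `d = 0` by the linear independence of
automorphisms. The row of the inverse matrix at the identity then expresses each `x_i` linearly in
the `y`'s.
-/

open Matrix

theorem linearIndependent_algEquiv_toLinearMap (R A B : Type*) [CommSemiring R] [Semiring A]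
    [Algebra R A] [CommRing B] [IsDomain B] [Algebra R B] :
    LinearIndependent B fun f : A ≃ₐ[R] B => f.toLinearMap :=
  (linearIndependent_toLinearMap R A B).comp (fun f : A ≃ₐ[R] B => (f : A →ₐ[R] B))
    AlgEquiv.coe_toAlgHom_injective

section ConjugateMatrix

variable {G F S K : Type*} [Group G] [CommSemiring F] [CommSemiring S] [Algebra F S]
  [Field K] [Algebra F K]

/-- The matrix of conjugates of `α` with entry `(k h⁻¹)(α)` in row `h` and column `k`, where `G`
acts on `S` through `e`. The order of the factors is chosen so that row `h` lists the coefficients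
of the conjugate sum at `h • i`. -/
def conjugateMatrix (e : G ≃* (S ≃ₐ[F] S)) (α : S) : Matrix G G S :=
  Matrix.of fun h k => e (k * h⁻¹) α

theorem conjugateMatrix_apply (e : G ≃* (S ≃ₐ[F] S)) (α : S) (h k : G) :
    conjugateMatrix e α h k = e (k * h⁻¹) α :=
  rfl

variable [Fintype G]

theorem conjugateMatrix_mulVec_apply (e : G ≃* (S ≃ₐ[F] S)) (α : S) (d : G → S) (h : G) :
    (conjugateMatrix e α *ᵥ d) h = (∑ k, d k • (e k).toLinearMap) (e h⁻¹ α) := by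
  simp [mulVec, dotProduct, conjugateMatrix_apply, mul_comm, -map_inv]

theorem isUnit_conjugateMatrix [DecidableEq G] (e : G ≃* (K ≃ₐ[F] K)) {α : K}
    (hα : Submodule.span F (Set.range fun g : K ≃ₐ[F] K => g α) = ⊤) :
    IsUnit (conjugateMatrix e α) := by
  rw [← mulVec_injective_iff_isUnit, ← coe_mulVecLin, injective_iff_map_eq_zero]
  intro d hd
  have hcomb : ∑ k, d k • (e k).toLinearMap = 0 := by
    refine LinearMap.ext_on_range hα fun f => ?_
    obtain ⟨g, rfl⟩ := e.surjective f
    have hg := congrFun hd g⁻¹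
    rwa [mulVecLin_apply, conjugateMatrix_mulVec_apply, inv_inv] at hg
  have hindep : LinearIndependent K fun k => (e k).toLinearMap :=
    (linearIndependent_algEquiv_toLinearMap F K K).comp e e.injective
  exact funext (Fintype.linearIndependent_iff.mp hindep d hcomb)

end ConjugateMatrix

section ConjugateSum

variable {G F S K σ M N : Type*} [Group G] [Fintype G] [MulAction G σ] [CommSemiring F]
  [CommSemiring S] [Algebra F S] [AddCommMonoid M] [Module S M]
  [Field K] [Algebra F K] [AddCommMonoid N] [Module K N]

/-- The sum `yᵢ = ∑_{g ∈ G} g(α) • x_{g i}` attached to a family `x` of vectors in an `S`-module,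
where `G` acts on `S` through `e` and on the index set. -/
def conjugateSum (e : G ≃* (S ≃ₐ[F] S)) (α : S) (x : σ → M) (i : σ) : M :=
  ∑ g, e g α • x (g • i)

theorem conjugateSum_smul (e : G ≃* (S ≃ₐ[F] S)) (α : S) (x : σ → M) (h : G) (i : σ) :
    conjugateSum e α x (h • i) = ∑ k, conjugateMatrix e α h k • x (k • i) :=
  Fintype.sum_equiv (Equiv.mulRight h) _ _ fun g => by
    simp only [conjugateMatrix_apply, Equiv.coe_mulRight, mul_inv_cancel_right, mul_smul]

theorem sum_inv_conjugateMatrix_smul_conjugateSum [DecidableEq G] (e : G ≃* (K ≃ₐ[F] K)) {α : K}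
    (hα : Submodule.span F (Set.range fun g : K ≃ₐ[F] K => g α) = ⊤) (x : σ → N) (i : σ) :
    ∑ h, (conjugateMatrix e α)⁻¹ 1 h • conjugateSum e α x (h • i) = x i := by
  set A := conjugateMatrix e α with hA
  have hinv : A⁻¹ * A = 1 :=
    nonsing_inv_mul A ((isUnit_iff_isUnit_det A).mp (isUnit_conjugateMatrix e hα))
  calc ∑ h, A⁻¹ 1 h • conjugateSum e α x (h • i)
      = ∑ h, ∑ k, (A⁻¹ 1 h * A h k) • x (k • i) := by
        simp only [conjugateSum_smul, Finset.smul_sum, smul_smul, hA]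
    _ = ∑ k, (A⁻¹ * A) 1 k • x (k • i) := by
        rw [Finset.sum_comm]
        simp only [mul_apply, Finset.sum_smul]
    _ = x i := by
        simp [hinv, one_apply]

theorem span_range_conjugateSum (e : G ≃* (K ≃ₐ[F] K)) {α : K}
    (hα : Submodule.span F (Set.range fun g : K ≃ₐ[F] K => g α) = ⊤) (x : σ → N) :
    Submodule.span K (Set.range (conjugateSum e α x)) = Submodule.span K (Set.range x) := by
  classical
  apply le_antisymm <;> rw [Submodule.span_le] <;> rintro _ ⟨i, rfl⟩
  · exact Submodule.sum_smul_mem _ _ fun g _ => Submodule.subset_span (Set.mem_range_self (g • i))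
  · rw [← sum_inv_conjugateMatrix_smul_conjugateSum e hα x i]
    exact Submodule.sum_smul_mem _ _ fun h _ => Submodule.subset_span (Set.mem_range_self (h • i))

end ConjugateSum

theorem polynomial_ring_generated_by_y_general {G F K σ : Type*} [Group G] [Fintype G]
    [CommSemiring F] [Field K] [Algebra F K] [MulAction G σ] (e : G ≃* (K ≃ₐ[F] K)) {α : K}
    (hα : Submodule.span F (Set.range fun g : K ≃ₐ[F] K => g α) = ⊤) :
    Algebra.adjoin K (Set.range fun i : σ =>
      ∑ g : G, MvPolynomial.C (e g α) * MvPolynomial.X (g • i)) = ⊤ := by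
  simp only [MvPolynomial.C_mul']
  calc Algebra.adjoin K (Set.range (conjugateSum e α MvPolynomial.X))
      = Algebra.adjoin K (Set.range MvPolynomial.X) := by
        rw [← Algebra.adjoin_span, span_range_conjugateSum e hα, Algebra.adjoin_span]
    _ = ⊤ := MvPolynomial.adjoin_range_X

/-- Let `G` be a subgroup of the group `𝕊_n ≅ S_n` of `n × n` permutation matrices (a
permutation matrix `g` is identified with the permutation `ρ_g` sending `i` to `j` when
`g eᵢ = eⱼ`) acting transitively on `{1, …, n}`, let `K/F` be a finite Galois extension with
Galois group identified with `G` via `e : G ≃* Gal(K/F)`, and let `α ∈ K` be a normal element.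
Set `yᵢ = ∑_{g ∈ G} g(α) · x_{ρ_g(i)} ∈ K[x₁, …, xₙ]`.  Then `K[y₁, …, yₙ] = K[x₁, …, xₙ]`,
i.e. the `yᵢ` generate the whole polynomial ring as a `K`-algebra. -/
theorem polynomial_ring_generated_by_y
    (n : ℕ) (hn : 0 < n) (G : Subgroup (Equiv.Perm (Fin n))) [Fintype G]
    (htrans : ∀ i j : Fin n, ∃ g : G, (g : Equiv.Perm (Fin n)) i = j)
    (F K : Type*) [Field F] [Field K] [Algebra F K] [FiniteDimensional F K] [IsGalois F K]
    (e : G ≃* (K ≃ₐ[F] K)) (α : K) (hα : IsNormalElement F α)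
    (y : Fin n → MvPolynomial (Fin n) K)
    (hy : ∀ i : Fin n, y i = ∑ g : G,
      MvPolynomial.C ((e g) α) * MvPolynomial.X ((g : Equiv.Perm (Fin n)) i)) :
    Algebra.adjoin K (Set.range y) = ⊤ := by
  rw [funext hy]
  exact polynomial_ring_generated_by_y_general e hα.2
end
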